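/- arXiv:1609.09707 — 6 statements merged into one kernel-verified Lean document; each statement's English description precedes it below -/
import Mathlib

section
/- Every order bounded increasing net of positive elements in an Archimedean vector lattice is order Cauchy. That is, if (x_α) is a net in a vector lattice X with 0 ≤ x_α ↑ ≤ x for some x ∈ X, then the doubly indexed net (x_α − x_{α'})_{(α,α')} order converges to 0. -/
open Filter Set

section Defs

variable {X : Type*} [Lattice X] [AddCommGroup X]
  [CovariantClass X X (· + ·) (· ≤ ·)]

/-- A net `x` *order converges* to `l`: there is a set `A ⊆ X` (playing the role of a net
`a_γ ↓ 0`), downward directed with infimum `0`, such that every `a ∈ A` eventually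
dominates `|x α - l|`. -/
def OrderTendsto {Γ : Type*} [Preorder Γ] (x : Γ → X) (l : X) : Prop :=
  ∃ A : Set X, A.Nonempty ∧ DirectedOn (· ≥ ·) A ∧ IsGLB A 0 ∧
    ∀ a ∈ A, ∃ α₀ : Γ, ∀ α, α₀ ≤ α → |x α - l| ≤ a

/-- A net `x` *uo-converges* to `l` if `|x α - l| ⊓ y` order converges to `0`
for every `y ≥ 0`. -/
def UoTendsto {Γ : Type*} [Preorder Γ] (x : Γ → X) (l : X) : Prop :=
  ∀ y : X, 0 ≤ y → OrderTendsto (fun α => |x α - l| ⊓ y) 0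

/-- A net is *order Cauchy* if the doubly indexed net of differences order converges to `0`. -/
def OrderCauchy {Γ : Type*} [Preorder Γ] (x : Γ → X) : Prop :=
  OrderTendsto (fun p : Γ × Γ => x p.1 - x p.2) 0

/-- A net is *uo-Cauchy* if the doubly indexed net of differences uo-converges to `0`. -/
def UoCauchy {Γ : Type*} [Preorder Γ] (x : Γ → X) : Prop :=
  UoTendsto (fun p : Γ × Γ => x p.1 - x p.2) 0

/-- The Archimedean property for a lattice-ordered group. -/
def VLArchimedean (X : Type*) [Lattice X] [AddCommGroup X] : Prop :=
  ∀ x y : X, 0 ≤ x → (∀ n : ℕ, n • x ≤ y) → x = 0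

end Defs

/-!
The differences `u - x α`, with `u` an upper bound of the increasing net `x`, dominate
`|x β - x γ|` for all `β, γ ≥ α`, so it is enough that their infimum is `0`. If `c` lies below all
of them, then `u - c` is an upper bound of `x` whenever `u` is. Iterating, `b - n • c` is an upper
bound for every `n`, and the Archimedean property forces `c⁺ = 0`.
-/

section UpperGaps

open scoped Pointwise

variable {X : Type*} [AddCommGroup X]

/-- The set of gaps `u - a` between an upper bound `u` of `s` and an element `a` of `s`. For `s` the
range of an increasing net, it serves as the net decreasing to `0` in the definition of
`OrderCauchy`. -/
def upperGaps [Preorder X] (s : Set X) : Set X := upperBounds s - s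

lemma upperGaps_nonempty [Preorder X] {s : Set X} (hs : s.Nonempty) (hbdd : BddAbove s) :
    (upperGaps s).Nonempty :=
  hbdd.sub hs

lemma directedOn_ge_upperGaps [SemilatticeInf X] [AddLeftMono X] {s : Set X}
    (hs : DirectedOn (· ≤ ·) s) : DirectedOn (· ≥ ·) (upperGaps s) := by
  rintro _ ⟨u, hu, a, ha, rfl⟩ _ ⟨v, hv, b, hb, rfl⟩
  obtain ⟨c, hc, hac, hbc⟩ := hs a ha b hb
  have huv : u ⊓ v ∈ upperBounds s := fun d hd => le_inf (hu hd) (hv hd)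
  exact ⟨u ⊓ v - c, sub_mem_sub huv hc, sub_le_sub inf_le_left hac, sub_le_sub inf_le_right hbc⟩

section Preorder

variable [Preorder X] [AddLeftMono X] {s : Set X}

lemma zero_mem_lowerBounds_upperGaps : 0 ∈ lowerBounds (upperGaps s) := by
  rintro _ ⟨u, hu, a, ha, rfl⟩
  exact sub_nonneg.2 (hu ha)

lemma sub_mem_upperBounds_of_mem_lowerBounds {c u : X} (hc : c ∈ lowerBounds (upperGaps s))
    (hu : u ∈ upperBounds s) : u - c ∈ upperBounds s :=
  fun _ ha => le_sub_comm.1 (hc (sub_mem_sub hu ha))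

lemma sub_nsmul_mem_upperBounds_of_mem_lowerBounds {c u : X} (hc : c ∈ lowerBounds (upperGaps s))
    (hu : u ∈ upperBounds s) (n : ℕ) : u - n • c ∈ upperBounds s := by
  induction n with
  | zero => rwa [zero_nsmul, sub_zero]
  | succ n ih =>
    rw [succ_nsmul, ← sub_sub]
    exact sub_mem_upperBounds_of_mem_lowerBounds hc ih

end Preorder

lemma isGLB_upperGaps [Lattice X] [AddLeftMono X] (harch : VLArchimedean X) {s : Set X}
    (hs : s.Nonempty) (hbdd : BddAbove s) : IsGLB (upperGaps s) 0 := by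
  refine ⟨zero_mem_lowerBounds_upperGaps, fun c hc => ?_⟩
  obtain ⟨a, ha⟩ := hs
  obtain ⟨b, hb⟩ := hbdd
  have hc' : c⁺ ∈ lowerBounds (upperGaps s) :=
    fun d hd => sup_le (hc hd) (zero_mem_lowerBounds_upperGaps hd)
  have hle (n : ℕ) : n • c⁺ ≤ b - a :=
    le_sub_comm.1 (sub_nsmul_mem_upperBounds_of_mem_lowerBounds hc' hb n ha)
  exact posPart_eq_zero.1 (harch c⁺ (b - a) (posPart_nonneg c) hle)

end UpperGaps

lemma abs_sub_le_sub_of_mem_Icc {X : Type*} [Lattice X] [AddCommGroup X] [AddLeftMono X]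
    {a b l u : X} (ha : a ∈ Icc l u) (hb : b ∈ Icc l u) : |a - b| ≤ u - l :=
  abs_le'.2 ⟨sub_le_sub ha.2 hb.1, (neg_sub a b).trans_le (sub_le_sub hb.2 ha.1)⟩

theorem stmt0_general {X : Type*} [Lattice X] [AddCommGroup X] [AddLeftMono X]
    (harch : VLArchimedean X) {Γ : Type*} [Preorder Γ] [IsDirected Γ (· ≤ ·)] [Nonempty Γ]
    {x : Γ → X} (hmono : Monotone x) (hbdd : BddAbove (range x)) :
    OrderCauchy x := by
  refine ⟨upperGaps (range x), upperGaps_nonempty (range_nonempty x) hbdd,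
    directedOn_ge_upperGaps (directedOn_range.2 hmono.directed_le),
    isGLB_upperGaps harch (range_nonempty x) hbdd, ?_⟩
  rintro _ ⟨u, hu, _, ⟨α, rfl⟩, rfl⟩
  have mem_Icc (β : Γ) (hβ : α ≤ β) : x β ∈ Icc (x α) u := ⟨hmono hβ, hu (mem_range_self β)⟩
  refine ⟨(α, α), fun p hp => ?_⟩
  rw [sub_zero]
  exact abs_sub_le_sub_of_mem_Icc (mem_Icc p.1 hp.1) (mem_Icc p.2 hp.2)

/-- Every order bounded increasing net of positive elements in an
Archimedean vector lattice is order Cauchy. -/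
theorem stmt0 {X : Type*} [Lattice X] [AddCommGroup X]
    [CovariantClass X X (· + ·) (· ≤ ·)] [Module ℝ X] [PosSMulMono ℝ X]
    (harch : VLArchimedean X)
    {Γ : Type*} [Preorder Γ] [IsDirected Γ (· ≤ ·)] [Nonempty Γ]
    (x : Γ → X) (hmono : Monotone x) (hpos : ∀ α, 0 ≤ x α)
    (b : X) (hb : ∀ α, x α ≤ b) :
    OrderCauchy x :=
  stmt0_general harch hmono ⟨b, forall_mem_range.2 hb⟩
end

section
/- Let X be an Archimedean vector lattice and let D be a subset of X₊. The following are equivalent: (1) the band generated by D equals X; (2) for every x ∈ X₊, if x ∧ d = 0 for all d ∈ D then x = 0; (3) for every net (x_α) in X₊, if x_α ∧ d →o 0 for every d ∈ D, then x_α →uo 0. -/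
open Filter Set

/-- A (Riesz) ideal of a vector lattice: a solid linear subspace. -/
def IsRieszIdeal {X : Type*} [Lattice X] [AddCommGroup X] [Module ℝ X] (I : Set X) : Prop :=
  (0 : X) ∈ I ∧ (∀ x ∈ I, ∀ y ∈ I, x + y ∈ I) ∧ (∀ (c : ℝ), ∀ x ∈ I, c • x ∈ I) ∧
    ∀ x y : X, |x| ≤ |y| → y ∈ I → x ∈ I

/-- A band: an order closed ideal, i.e. an ideal closed under existing suprema
of its subsets. -/
def IsBand {X : Type*} [Lattice X] [AddCommGroup X] [Module ℝ X] (B : Set X) : Prop :=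
  IsRieszIdeal B ∧ ∀ A ⊆ B, ∀ s : X, IsLUB A s → s ∈ B

/-!
Disjoint complements are bands, so if `D` generates `X` then the band `Dᵈᵈ ⊇ D` is all of `X`, and
`Dᵈ = {0}` because a vector disjoint from itself vanishes. Similarly, a vector disjoint from `D` is
a constant net, and constant nets are uo-null only if they are `0`.

The two implications out of `Dᵈ = {0}` rest on one Archimedean fact: if `0 ≤ v ≤ (y - n • d)⁺` for
all `n`, then `n • (v ⊓ d) ≤ y` by induction on `n`, because `y = y ⊓ n • d + (y - n • d)⁺`; hence
`v ⊓ d = 0`. A vector `v` with such bounds for every `d ∈ D` is therefore `0`.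

For a band `B ⊇ D`, take `v = (x - u)⁺` with `u` an upper bound of `B ∩ [0, x]`, which contains
`x ⊓ n • d`; this shows `x = sup (B ∩ [0, x]) ∈ B`. For a net `x`, take `v = l⁺` with `l` a lower
bound of the eventual upper bounds of `x α ⊓ y`: since
`x α ⊓ y ≤ n • (x α ⊓ d) + (y - n • d)⁺` and the first summand is order null, `l⁺ ≤ (y - n • d)⁺`.
-/

lemma inf_eq_zero_of_le {X : Type*} [SemilatticeInf X] [Zero X] {x y z : X} (hx : 0 ≤ x)
    (hz : 0 ≤ z) (hxy : x ≤ y) (h : y ⊓ z = 0) : x ⊓ z = 0 :=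
  ((inf_le_inf_right z hxy).trans_eq h).antisymm (le_inf hx hz)

section LatticeOrderedGroup

variable {X : Type*} [Lattice X] [AddCommGroup X] [AddLeftMono X]

lemma eq_zero_of_abs_nonpos {x : X} (h : |x| ≤ 0) : x = 0 :=
  ((le_abs_self x).trans h).antisymm (neg_nonpos.1 ((neg_le_abs x).trans h))

lemma inf_add_le_inf_add_inf {x y z : X} (hx : 0 ≤ x) (hy : 0 ≤ y) (hz : 0 ≤ z) :
    z ⊓ (x + y) ≤ z ⊓ x + z ⊓ y := by
  rw [add_inf, inf_add, inf_add]
  exact le_inf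
    (le_inf (inf_le_left.trans (le_add_of_nonneg_right hz))
      (inf_le_left.trans (le_add_of_nonneg_left hx)))
    (le_inf (inf_le_left.trans (le_add_of_nonneg_right hy)) inf_le_right)

lemma inf_nsmul_le_nsmul_inf {x z : X} (hx : 0 ≤ x) (hz : 0 ≤ z) (n : ℕ) :
    z ⊓ n • x ≤ n • (z ⊓ x) := by
  induction n with
  | zero => simp only [zero_nsmul, inf_le_right]
  | succ n ih =>
    rw [succ_nsmul, succ_nsmul]
    exact (inf_add_le_inf_add_inf (nsmul_nonneg hx n) hx hz).trans (add_le_add_left ih _)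

lemma add_inf_eq_zero {x y z : X} (hx : 0 ≤ x) (hy : 0 ≤ y) (hz : 0 ≤ z) (hxz : x ⊓ z = 0)
    (hyz : y ⊓ z = 0) : (x + y) ⊓ z = 0 := by
  refine le_antisymm ?_ (le_inf (add_nonneg hx hy) hz)
  calc (x + y) ⊓ z = z ⊓ (x + y) := inf_comm ..
    _ ≤ z ⊓ x + z ⊓ y := inf_add_le_inf_add_inf hx hy hz
    _ = 0 := by rw [inf_comm z, inf_comm z, hxz, hyz, add_zero]

lemma nsmul_inf_eq_zero {x z : X} (hx : 0 ≤ x) (hz : 0 ≤ z) (h : x ⊓ z = 0) (n : ℕ) :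
    n • x ⊓ z = 0 := by
  refine le_antisymm ?_ (le_inf (nsmul_nonneg hx n) hz)
  calc n • x ⊓ z = z ⊓ n • x := inf_comm ..
    _ ≤ n • (z ⊓ x) := inf_nsmul_le_nsmul_inf hx hz n
    _ = 0 := by rw [inf_comm, h, nsmul_zero]

lemma add_le_of_posPart_inf_eq_zero {a s w : X} (has : a ≤ s) (hws : w ≤ s⁺)
    (h : a⁺ ⊓ w = 0) : a + w ≤ s := by
  have hsup : a⁺ + w ≤ s⁺ := by
    rw [← inf_add_sup, h, zero_add]
    exact sup_le (posPart_mono has) hws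
  calc a + w = a⁺ + w - a⁻ := by rw [add_sub_right_comm, posPart_sub_negPart]
    _ ≤ s⁺ - s⁻ := sub_le_sub hsup (negPart_anti has)
    _ = s := posPart_sub_negPart s

lemma posPart_inf_eq_zero_of_isLUB {A : Set X} {s z : X} (hs : IsLUB A s) (hz : 0 ≤ z)
    (hA : ∀ a ∈ A, a⁺ ⊓ z = 0) : s⁺ ⊓ z = 0 := by
  have hs_pos := posPart_nonneg s
  have hub : s - s⁺ ⊓ z ∈ upperBounds A := fun a ha => by
    have ha_disj : a⁺ ⊓ (s⁺ ⊓ z) = 0 := by rw [inf_left_comm, hA a ha, inf_of_le_right hs_pos]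
    exact le_sub_iff_add_le.2 (add_le_of_posPart_inf_eq_zero (hs.1 ha) inf_le_left ha_disj)
  exact ((le_sub_self_iff s).1 (hs.2 hub)).antisymm (le_inf hs_pos hz)

lemma abs_inf_eq_zero_of_isLUB {A : Set X} {s z : X} (hs : IsLUB A s) (hz : 0 ≤ z)
    (hA : ∀ a ∈ A, |a| ⊓ z = 0) : |s| ⊓ z = 0 := by
  have hpos : s⁺ ⊓ z = 0 := posPart_inf_eq_zero_of_isLUB hs hz fun a ha =>
    inf_eq_zero_of_le (posPart_nonneg a) hz (sup_le (le_abs_self a) (abs_nonneg a)) (hA a ha)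
  have hneg : s⁻ ⊓ z = 0 := by
    obtain rfl | ⟨a, ha⟩ := A.eq_empty_or_nonempty
    · -- The supremum of `∅` is a least element of `X`, so `s ≤ s + s`.
      have hs_nonneg : 0 ≤ s := (le_add_iff_nonneg_right s).1 (isLUB_empty_iff.1 hs (s + s))
      rw [negPart_eq_zero.2 hs_nonneg, inf_of_le_left hz]
    · exact inf_eq_zero_of_le (negPart_nonneg s) hz
        ((negPart_anti (hs.1 ha)).trans (sup_le (neg_le_abs a) (abs_nonneg a))) (hA a ha)
  rw [← posPart_add_negPart]
  exact add_inf_eq_zero (posPart_nonneg s) (negPart_nonneg s) hz hpos hneg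

lemma inf_le_nsmul_inf_add_posPart {x d : X} (hx : 0 ≤ x) (hd : 0 ≤ d) (y : X) (n : ℕ) :
    x ⊓ y ≤ n • (x ⊓ d) + (y - n • d)⁺ :=
  calc x ⊓ y = x ⊓ y ⊓ n • d + (x ⊓ y - n • d)⁺ := by
        rw [inf_eq_sub_posPart_sub (x ⊓ y), sub_add_cancel]
    _ ≤ x ⊓ n • d + (y - n • d)⁺ := add_le_add (inf_le_inf_right _ inf_le_left)
        (posPart_mono (sub_le_sub_right inf_le_right _))
    _ ≤ n • (x ⊓ d) + (y - n • d)⁺ := add_le_add_left (inf_nsmul_le_nsmul_inf hd hx n) _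

lemma VLArchimedean.inf_eq_zero_of_forall_le_posPart (harch : VLArchimedean X) {v y d : X}
    (hv : 0 ≤ v) (hy : 0 ≤ y) (hd : 0 ≤ d) (h : ∀ n : ℕ, v ≤ (y - n • d)⁺) : v ⊓ d = 0 := by
  refine harch _ y (le_inf hv hd) fun n => ?_
  induction n with
  | zero => rwa [zero_nsmul]
  | succ n ih =>
    calc (n + 1) • (v ⊓ d) = n • (v ⊓ d) + v ⊓ d := succ_nsmul _ n
      _ ≤ y ⊓ n • d + (y - n • d)⁺ :=
          add_le_add (le_inf ih (nsmul_le_nsmul_right inf_le_right n)) (inf_le_left.trans (h n))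
      _ = y := by rw [inf_eq_sub_posPart_sub, sub_add_cancel]

end LatticeOrderedGroup

lemma abs_smul_le_abs_smul_abs {R X : Type*} [Ring R] [LinearOrder R] [IsOrderedRing R]
    [Lattice X] [AddCommGroup X] [Module R X] [PosSMulMono R X] (c : R) (x : X) :
    |c • x| ≤ |c| • |x| := by
  obtain hc | hc := le_total 0 c
  · rw [abs_of_nonneg hc]
    refine abs_le'.2 ⟨smul_le_smul_of_nonneg_left (le_abs_self x) hc, ?_⟩
    rw [← smul_neg]
    exact smul_le_smul_of_nonneg_left (neg_le_abs x) hc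
  · rw [abs_of_nonpos hc]
    have hc' := neg_nonneg.2 hc
    refine abs_le'.2 ⟨?_, ?_⟩
    · rw [← neg_smul_neg]
      exact smul_le_smul_of_nonneg_left (neg_le_abs x) hc'
    · rw [← neg_smul]
      exact smul_le_smul_of_nonneg_left (le_abs_self x) hc'

section DisjointComplement

variable {X : Type*} [Lattice X] [AddCommGroup X]

lemma IsRieszIdeal.nsmul_mem [Module ℝ X] {I : Set X} (hI : IsRieszIdeal I) {x : X} (hx : x ∈ I)
    (n : ℕ) : n • x ∈ I := by
  rw [← Nat.cast_smul_eq_nsmul ℝ]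
  exact hI.2.2.1 n x hx

lemma IsRieszIdeal.mem_of_abs_le [Module ℝ X] {I : Set X} (hI : IsRieszIdeal I) {x y : X}
    (hy : y ∈ I) (hxy : |x| ≤ |y|) : x ∈ I :=
  hI.2.2.2 x y hxy hy

/-- The disjoint complement `Dᵈ` of a set `D`: the vectors `x` with `|x| ⊓ |d| = 0` for all
`d ∈ D`. -/
def disjointCompl (D : Set X) : Set X :=
  {x | ∀ d ∈ D, |x| ⊓ |d| = 0}

lemma disjointCompl_anti : Antitone (disjointCompl : Set X → Set X) :=
  fun _ _ h _ hx d hd => hx d (h hd)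

lemma subset_disjointCompl_disjointCompl (D : Set X) : D ⊆ disjointCompl (disjointCompl D) :=
  fun d hd x hx => by rw [inf_comm, hx d hd]

variable [AddLeftMono X]

lemma zero_mem_disjointCompl (D : Set X) : 0 ∈ disjointCompl D :=
  fun d _ => by rw [abs_zero, inf_of_le_left (abs_nonneg d)]

lemma disjointCompl_eq_singleton_zero_iff {D : Set X} (hD : ∀ d ∈ D, 0 ≤ d) :
    disjointCompl D = {0} ↔ ∀ x : X, 0 ≤ x → (∀ d ∈ D, x ⊓ d = 0) → x = 0 := by
  constructor
  · intro h x hx hxD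
    have hmem : x ∈ disjointCompl D := fun d hd => by
      rw [abs_of_nonneg hx, abs_of_nonneg (hD d hd), hxD d hd]
    rwa [h] at hmem
  · refine fun h => eq_singleton_iff_unique_mem.2 ⟨zero_mem_disjointCompl D, fun x hx => ?_⟩
    have habs : |x| = 0 := h |x| (abs_nonneg x) fun d hd => by
      simpa only [abs_of_nonneg (hD d hd)] using hx d hd
    exact eq_zero_of_abs_nonpos habs.le

variable [Module ℝ X]

lemma isRieszIdeal_disjointCompl [PosSMulMono ℝ X] (D : Set X) :
    IsRieszIdeal (disjointCompl D) := by
  refine ⟨zero_mem_disjointCompl D, fun x hx y hy d hd => ?_, fun c x hx d hd => ?_,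
    fun x y hxy hy d hd => inf_eq_zero_of_le (abs_nonneg x) (abs_nonneg d) hxy (hy d hd)⟩
  · exact inf_eq_zero_of_le (abs_nonneg _) (abs_nonneg d) (abs_add_le x y)
      (add_inf_eq_zero (abs_nonneg x) (abs_nonneg y) (abs_nonneg d) (hx d hd) (hy d hd))
  · obtain ⟨n, hn⟩ := exists_nat_ge |c|
    have hle : |c • x| ≤ n • |x| :=
      calc |c • x| ≤ |c| • |x| := abs_smul_le_abs_smul_abs c x
        _ ≤ (n : ℝ) • |x| := by
            rw [← sub_nonneg, ← sub_smul]
            exact smul_nonneg (sub_nonneg.2 hn) (abs_nonneg x)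
        _ = n • |x| := Nat.cast_smul_eq_nsmul ℝ n |x|
    exact inf_eq_zero_of_le (abs_nonneg _) (abs_nonneg d) hle
      (nsmul_inf_eq_zero (abs_nonneg x) (abs_nonneg d) (hx d hd) n)

lemma isBand_disjointCompl [PosSMulMono ℝ X] (D : Set X) : IsBand (disjointCompl D) :=
  ⟨isRieszIdeal_disjointCompl D, fun _ hA _ hs d hd =>
    abs_inf_eq_zero_of_isLUB hs (abs_nonneg d) fun _ ha => hA ha d hd⟩

lemma disjointCompl_eq_singleton_zero_of_forall_isBand [PosSMulMono ℝ X] {D : Set X}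
    (h : ∀ B : Set X, IsBand B → D ⊆ B → B = univ) : disjointCompl D = {0} := by
  refine eq_singleton_iff_unique_mem.2 ⟨zero_mem_disjointCompl D, fun x hx => ?_⟩
  have huniv : disjointCompl (disjointCompl D) = univ :=
    h _ (isBand_disjointCompl _) (subset_disjointCompl_disjointCompl D)
  have hx_self : |x| ⊓ |x| = 0 := (huniv ▸ mem_univ x : x ∈ disjointCompl (disjointCompl D)) x hx
  exact eq_zero_of_abs_nonpos (inf_idem |x| ▸ hx_self).le

lemma IsRieszIdeal.isLUB_inter_Icc (harch : VLArchimedean X) {I : Set X} (hI : IsRieszIdeal I)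
    (hId : disjointCompl I = {0}) {x : X} (hx : 0 ≤ x) : IsLUB (I ∩ Icc 0 x) x := by
  refine ⟨fun b hb => hb.2.2, fun u hu => ?_⟩
  have hgap : ∀ d ∈ I, ∀ n : ℕ, (x - u)⁺ ≤ (x - n • |d|)⁺ := fun d hd n => by
    have hnd : 0 ≤ n • |d| := nsmul_nonneg (abs_nonneg d) n
    have hmem : x ⊓ n • |d| ∈ I := by
      refine hI.mem_of_abs_le (hI.nsmul_mem (hI.mem_of_abs_le hd (abs_abs d).le) n) ?_
      rw [abs_of_nonneg (le_inf hx hnd), abs_of_nonneg hnd]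
      exact inf_le_right
    calc (x - u)⁺ ≤ (x - x ⊓ n • |d|)⁺ :=
          posPart_mono (sub_le_sub_left (hu ⟨hmem, le_inf hx hnd, inf_le_left⟩) x)
      _ = (x - n • |d|)⁺⁺ := by rw [inf_eq_sub_posPart_sub, sub_sub_cancel]
      _ = (x - n • |d|)⁺ := posPart_eq_self.2 (posPart_nonneg _)
  have hmem : (x - u)⁺ ∈ disjointCompl I := fun d hd => by
    rw [abs_of_nonneg (posPart_nonneg _)]
    exact harch.inf_eq_zero_of_forall_le_posPart (posPart_nonneg _) hx (abs_nonneg d) (hgap d hd)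
  rw [hId] at hmem
  exact sub_nonpos.1 (posPart_eq_zero.1 hmem)

lemma IsBand.eq_univ_of_disjointCompl_eq (harch : VLArchimedean X) {B : Set X} (hB : IsBand B)
    (hBd : disjointCompl B = {0}) : B = univ := by
  refine eq_univ_of_forall fun x => ?_
  have habs : |x| ∈ B :=
    hB.2 _ inter_subset_left |x| (hB.1.isLUB_inter_Icc harch hBd (abs_nonneg x))
  exact hB.1.mem_of_abs_le habs (abs_abs x).ge

theorem forall_isBand_eq_univ_iff [PosSMulMono ℝ X] (harch : VLArchimedean X) {D : Set X} :
    (∀ B : Set X, IsBand B → D ⊆ B → B = univ) ↔ disjointCompl D = {0} := by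
  refine ⟨disjointCompl_eq_singleton_zero_of_forall_isBand, fun h B hB hDB => ?_⟩
  refine hB.eq_univ_of_disjointCompl_eq harch ?_
  exact eq_singleton_iff_unique_mem.2 ⟨zero_mem_disjointCompl B, fun x hx =>
    (eq_singleton_iff_unique_mem.1 h).2 x (disjointCompl_anti hDB hx)⟩

end DisjointComplement

section OrderConvergence

/-- The eventual upper bounds of a net `z`. The infimum of this set, when it exists, is the order
limit superior of `z`, so a positive net is order null exactly when the infimum is `0`. -/
def eventualUpperBounds {X Γ : Type*} [LE X] [Preorder Γ] (z : Γ → X) : Set X :=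
  {a | ∀ᶠ α in atTop, z α ≤ a}

lemma zero_mem_lowerBounds_eventualUpperBounds {X Γ : Type*} [Zero X] [Preorder X] [Preorder Γ]
    [IsDirected Γ (· ≤ ·)] [Nonempty Γ] {z : Γ → X} (hz : ∀ α, 0 ≤ z α) :
    0 ∈ lowerBounds (eventualUpperBounds z) := fun _ ha =>
  let ⟨α, hα⟩ := ha.exists
  (hz α).trans hα

variable {X : Type*} [Lattice X] [AddCommGroup X] [AddLeftMono X] {Γ : Type*} [Preorder Γ]

lemma orderTendsto_const_iff [Nonempty Γ] {k l : X} :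
    OrderTendsto (fun _ : Γ => k) l ↔ k = l := by
  constructor
  · rintro ⟨A, -, -, hA, hbound⟩
    have hle : |k - l| ≤ 0 := hA.2 fun a ha => let ⟨α, hα⟩ := hbound a ha; hα α le_rfl
    exact sub_eq_zero.1 (eq_zero_of_abs_nonpos hle)
  · rintro rfl
    refine ⟨{0}, singleton_nonempty 0, directedOn_singleton 0, isGLB_singleton, ?_⟩
    rintro _ rfl
    exact ⟨Classical.arbitrary Γ, fun _ _ => by rw [sub_self, abs_zero]⟩

lemma uoTendsto_const_iff [Nonempty Γ] {k l : X} : UoTendsto (fun _ : Γ => k) l ↔ k = l := by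
  constructor
  · intro h
    have habs : |k - l| ⊓ |k - l| = 0 := orderTendsto_const_iff.1 (h |k - l| (abs_nonneg _))
    rw [inf_idem] at habs
    exact sub_eq_zero.1 (eq_zero_of_abs_nonpos habs.le)
  · rintro rfl y hy
    rw [orderTendsto_const_iff, sub_self, abs_zero, inf_of_le_left hy]

lemma uoTendsto_zero_iff_of_nonneg {x : Γ → X} (hx : ∀ α, 0 ≤ x α) :
    UoTendsto x 0 ↔ ∀ y : X, 0 ≤ y → OrderTendsto (fun α => x α ⊓ y) 0 := by
  simp only [UoTendsto, sub_zero, abs_of_nonneg (hx _)]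

variable [IsDirected Γ (· ≤ ·)]

lemma OrderTendsto.add {x y : Γ → X} {k l : X} (hx : OrderTendsto x k) (hy : OrderTendsto y l) :
    OrderTendsto (fun α => x α + y α) (k + l) := by
  obtain ⟨A, hAne, hAdir, hA, hxA⟩ := hx
  obtain ⟨B, hBne, hBdir, hB, hyB⟩ := hy
  refine ⟨Set.image2 (· + ·) A B, hAne.image2 hBne, ?_, ?_, ?_⟩
  · rintro _ ⟨a, ha, b, hb, rfl⟩ _ ⟨a', ha', b', hb', rfl⟩
    obtain ⟨a'', ha'', haa'', ha'a''⟩ := hAdir a ha a' ha'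
    obtain ⟨b'', hb'', hbb'', hb'b''⟩ := hBdir b hb b' hb'
    exact ⟨a'' + b'', mem_image2_of_mem ha'' hb'',
      add_le_add haa'' hbb'', add_le_add ha'a'' hb'b''⟩
  · simpa only [add_zero, image2_add] using hA.add hB
  · rintro _ ⟨a, ha, b, hb, rfl⟩
    obtain ⟨α, hα⟩ := hxA a ha
    obtain ⟨β, hβ⟩ := hyB b hb
    obtain ⟨γ, hαγ, hβγ⟩ := exists_ge_ge α β
    refine ⟨γ, fun δ hδ => ?_⟩
    rw [add_sub_add_comm]
    exact (abs_add_le _ _).trans (add_le_add (hα δ (hαγ.trans hδ)) (hβ δ (hβγ.trans hδ)))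

variable [Nonempty Γ]

lemma OrderTendsto.const_nsmul {x : Γ → X} {l : X} (hx : OrderTendsto x l) (n : ℕ) :
    OrderTendsto (fun α => n • x α) (n • l) := by
  induction n with
  | zero => simp only [zero_nsmul, orderTendsto_const_iff]
  | succ n ih => simpa only [succ_nsmul] using ih.add hx

lemma orderTendsto_zero_iff_isGLB {z : Γ → X} (hz : ∀ α, 0 ≤ z α) :
    OrderTendsto z 0 ↔ IsGLB (eventualUpperBounds z) 0 := by
  have habs : ∀ α, |z α - 0| = z α := fun α => by rw [sub_zero, abs_of_nonneg (hz α)]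
  simp only [OrderTendsto, habs]
  constructor
  · rintro ⟨A, -, -, hA, hbound⟩
    exact ⟨zero_mem_lowerBounds_eventualUpperBounds hz, fun b hb =>
      hA.2 fun a ha => hb (eventually_atTop.2 (hbound a ha))⟩
  · intro h
    have hne : (eventualUpperBounds z).Nonempty := by
      by_contra hempty
      rw [not_nonempty_iff_eq_empty] at hempty
      have htop : IsTop (0 : X) := isGLB_empty_iff.1 (hempty ▸ h)
      exact eq_empty_iff_forall_notMem.1 hempty 0 (Eventually.of_forall fun α => htop (z α))
    exact ⟨_, hne, fun a ha b hb =>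
      ⟨a ⊓ b, (ha.and hb).mono fun _ h => le_inf h.1 h.2, inf_le_left, inf_le_right⟩,
      h, fun a ha => eventually_atTop.1 ha⟩

lemma le_of_orderTendsto_zero_of_le_add {z w : Γ → X} {v c : X} (hz : ∀ α, 0 ≤ z α)
    (hz_lim : OrderTendsto z 0) (hw : ∀ α, w α ≤ z α + c)
    (hv : v ∈ lowerBounds (eventualUpperBounds w)) : v ≤ c := by
  rw [orderTendsto_zero_iff_isGLB hz] at hz_lim
  refine sub_nonpos.1 (hz_lim.2 fun a ha => sub_le_iff_le_add.2 (hv ?_))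
  exact ha.mono fun α hα => (hw α).trans (add_le_add_left hα c)

lemma inf_eq_zero_of_mem_lowerBounds_eventualUpperBounds (harch : VLArchimedean X) {x : Γ → X}
    {d v y : X} (hx : ∀ α, 0 ≤ x α) (hd : 0 ≤ d) (hv : 0 ≤ v) (hy : 0 ≤ y)
    (hxd : OrderTendsto (fun α => x α ⊓ d) 0)
    (hvx : v ∈ lowerBounds (eventualUpperBounds fun α => x α ⊓ y)) : v ⊓ d = 0 := by
  refine harch.inf_eq_zero_of_forall_le_posPart hv hy hd fun n => ?_
  have hnull : OrderTendsto (fun α => n • (x α ⊓ d)) 0 := by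
    simpa only [nsmul_zero] using hxd.const_nsmul n
  exact le_of_orderTendsto_zero_of_le_add (fun α => nsmul_nonneg (le_inf (hx α) hd) n) hnull
    (fun α => inf_le_nsmul_inf_add_posPart (hx α) hd y n) hvx

theorem uoTendsto_zero_of_forall_orderTendsto_inf (harch : VLArchimedean X) {D : Set X}
    (hD : ∀ d ∈ D, 0 ≤ d) (hDd : disjointCompl D = {0}) {x : Γ → X} (hx : ∀ α, 0 ≤ x α)
    (hxD : ∀ d ∈ D, OrderTendsto (fun α => x α ⊓ d) 0) : UoTendsto x 0 := by
  rw [disjointCompl_eq_singleton_zero_iff hD] at hDd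
  rw [uoTendsto_zero_iff_of_nonneg hx]
  intro y hy
  have hxy : ∀ α, 0 ≤ x α ⊓ y := fun α => le_inf (hx α) hy
  rw [orderTendsto_zero_iff_isGLB hxy]
  have hlower := zero_mem_lowerBounds_eventualUpperBounds hxy
  refine ⟨hlower, fun l hl => posPart_eq_zero.1 (hDd l⁺ (posPart_nonneg l) fun d hd => ?_)⟩
  exact inf_eq_zero_of_mem_lowerBounds_eventualUpperBounds harch hx (hD d hd) (posPart_nonneg l) hy
    (hxD d hd) fun a ha => sup_le (hl ha) (hlower ha)

end OrderConvergence

/-- For a set `D` of positive vectors in an Archimedean vector lattice `X`,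
the following are equivalent: (1) the band generated by `D` is `X` (i.e. the only band
containing `D` is `X` itself); (2) any positive `x` disjoint from all elements of `D` is `0`;
(3) any net of positive vectors `(x_α)` with `x_α ⊓ d →o 0` for all `d ∈ D` is uo-null. -/
theorem stmt2 {X : Type*} [Lattice X] [AddCommGroup X]
    [CovariantClass X X (· + ·) (· ≤ ·)] [Module ℝ X] [PosSMulMono ℝ X]
    (harch : VLArchimedean X) (D : Set X) (hD : ∀ d ∈ D, 0 ≤ d) :
    ((∀ B : Set X, IsBand B → D ⊆ B → B = Set.univ) ↔
        (∀ x : X, 0 ≤ x → (∀ d ∈ D, x ⊓ d = 0) → x = 0)) ∧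
      ((∀ x : X, 0 ≤ x → (∀ d ∈ D, x ⊓ d = 0) → x = 0) ↔
        (∀ (Γ : Type*) [Preorder Γ] [IsDirected Γ (· ≤ ·)] [Nonempty Γ] (x : Γ → X),
          (∀ α, 0 ≤ x α) → (∀ d ∈ D, OrderTendsto (fun α => x α ⊓ d) 0) →
            UoTendsto x 0)) := by
  rw [← disjointCompl_eq_singleton_zero_iff hD]
  refine ⟨forall_isBand_eq_univ_iff harch, fun h Γ _ _ _ x hx hxD =>
    uoTendsto_zero_of_forall_orderTendsto_inf harch hD h hx hxD, fun h => ?_⟩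
  rw [disjointCompl_eq_singleton_zero_iff hD]
  intro x hx hxD
  have hconst : UoTendsto (fun _ : PUnit => x) 0 :=
    h PUnit _ (fun _ => hx) fun d hd => orderTendsto_const_iff.2 (hxD d hd)
  exact uoTendsto_const_iff.1 hconst
end

section
/- Let X be an order complete vector lattice with a weak unit u > 0. A net (x_α) in X is uo-Cauchy if and only if inf_α sup_{β, β' ≥ α} |x_β − x_{β'}| ∧ u = 0. -/
open Filter Set

/-!
Write `t α` for the supremum of the tail `{z β : β ≥ α}` of an order bounded positive net `z`. These
suprema decrease and are the smallest possible eventual bounds for `z`, so `z` order converges to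
`0` exactly when `inf_α t α = 0`. For `z = |x - l| ⊓ y`, infinite distributivity identifies
`t α ⊓ u` with the tail supremum of `|x - l| ⊓ y ⊓ u ≤ |x - l| ⊓ u`. Hence `inf_α (t α ⊓ u) = 0` as
soon as `|x - l| ⊓ u` order converges to `0`, and then `inf_α t α = 0` because `u` is a weak unit:
it is enough to test uo-convergence against `y = u`.
-/

/-- Order completeness (also called Dedekind completeness): every nonempty order bounded subset has
a supremum. -/
def OrderComplete (X : Type*) [Preorder X] : Prop :=
  ∀ S : Set X, S.Nonempty → BddBelow S → BddAbove S → ∃ s, IsLUB S s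

/-- A weak unit of a lattice-ordered group: a strictly positive element disjoint from no positive
element other than `0`. -/
structure IsWeakUnit {X : Type*} [Lattice X] [AddCommGroup X] (u : X) : Prop where
  pos : 0 < u
  eq_zero_of_inf_eq_zero : ∀ x : X, 0 ≤ x → x ⊓ u = 0 → x = 0

theorem OrderComplete.exists_isLUB_image_Ici {X I : Type*} [Preorder X] [Preorder I]
    (hX : OrderComplete X) {z : I → X} (hbelow : BddBelow (range z)) (habove : BddAbove (range z)) :
    ∃ s : I → X, ∀ i, IsLUB (z '' Ici i) (s i) :=
  Classical.skolem.1 fun _ =>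
    hX _ (nonempty_Ici.image z) (hbelow.mono (image_subset_range _ _))
      (habove.mono (image_subset_range _ _))

section LatticeOrderedGroup

variable {X : Type*} [Lattice X] [AddCommGroup X]

theorem IsWeakUnit.isGLB_zero_of_image_inf {u : X} (hu : IsWeakUnit u) {A : Set X}
    (hA : IsGLB ((· ⊓ u) '' A) 0) : IsGLB A 0 := by
  have hnonneg : ∀ a ∈ A, 0 ≤ a := fun a ha => (hA.1 (mem_image_of_mem _ ha)).trans inf_le_left
  refine ⟨hnonneg, fun b hb => ?_⟩
  have hle : (b ⊔ 0) ⊓ u ≤ 0 := by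
    refine hA.2 ?_
    rintro _ ⟨a, ha, rfl⟩
    exact inf_le_inf_right u (sup_le (hb ha) (hnonneg a ha))
  have hzero : b ⊔ 0 = 0 :=
    hu.eq_zero_of_inf_eq_zero _ le_sup_right (hle.antisymm (le_inf le_sup_right hu.pos.le))
  exact sup_eq_right.1 hzero

theorem OrderTendsto.of_abs_le {I : Type*} [Preorder I] {x y : I → X} (hy : OrderTendsto y 0)
    (hle : ∀ i, |x i| ≤ |y i|) : OrderTendsto x 0 := by
  simp only [OrderTendsto, sub_zero] at hy ⊢
  obtain ⟨A, hne, hdir, hinf, hbound⟩ := hy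
  refine ⟨A, hne, hdir, hinf, fun a ha => ?_⟩
  obtain ⟨i₀, hi₀⟩ := hbound a ha
  exact ⟨i₀, fun i hi => (hle i).trans (hi₀ i hi)⟩

variable [CovariantClass X X (· + ·) (· ≤ ·)]

theorem isLUB_image_inf_right {D : Set X} {t : X} (ht : IsLUB D t) (u : X) :
    IsLUB ((· ⊓ u) '' D) (t ⊓ u) := by
  refine ⟨?_, fun s hs => ?_⟩
  · rintro _ ⟨d, hd, rfl⟩
    exact inf_le_inf_right u (ht.1 hd)
  -- `d ⊓ u + d ⊔ u = d + u` turns a bound on `d ⊓ u` into one on `d`, where `ht` applies, and back.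
  have hbound : t ≤ s + (t ⊔ u) - u := ht.2 fun d hd => by
    rw [le_sub_iff_add_le, ← inf_add_sup d u]
    exact add_le_add (hs (mem_image_of_mem _ hd)) (sup_le_sup_right (ht.1 hd) u)
  rw [le_sub_iff_add_le, ← inf_add_sup t u] at hbound
  exact le_of_add_le_add_right hbound

-- Tails need only be taken along a cofinal `φ`: a net on `Γ × Γ` has its tails along the diagonal.
theorem orderTendsto_zero_iff_isGLB_range {I Γ : Type*} [Preorder I] [Preorder Γ]
    [IsDirected Γ (· ≤ ·)] [Nonempty Γ] {z : I → X} (hz : ∀ i, 0 ≤ z i) {φ : Γ → I}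
    (hmono : Monotone φ) (hcofinal : IsCofinal (range φ)) {s : Γ → X}
    (hs : ∀ α, IsLUB (z '' Ici (φ α)) (s α)) :
    OrderTendsto z 0 ↔ IsGLB (range s) 0 := by
  have habs : ∀ i, |z i - 0| = z i := fun i => by rw [sub_zero, abs_of_nonneg (hz i)]
  simp only [OrderTendsto, habs]
  constructor
  · rintro ⟨A, -, -, hinf, hbound⟩
    refine ⟨?_, fun b hb => hinf.2 fun a ha => ?_⟩
    · rintro _ ⟨α, rfl⟩
      exact (hz (φ α)).trans ((hs α).1 (mem_image_of_mem z self_mem_Ici))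
    · obtain ⟨i₀, hi₀⟩ := hbound a ha
      obtain ⟨_, ⟨α, rfl⟩, hα⟩ := hcofinal i₀
      refine (hb (mem_range_self α)).trans ((hs α).2 ?_)
      rintro _ ⟨i, hi, rfl⟩
      exact hi₀ i (hα.trans hi)
  · intro hinf
    have hanti : Antitone s := fun α γ hαγ =>
      (hs γ).mono (hs α) (image_mono (Ici_subset_Ici.2 (hmono hαγ)))
    refine ⟨range s, range_nonempty s, ?_, hinf, ?_⟩
    · exact directedOn_range.2 hanti.directed_ge
    · rintro _ ⟨α, rfl⟩
      exact ⟨φ α, fun i hi => (hs α).1 (mem_image_of_mem z hi)⟩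

theorem uoTendsto_iff_orderTendsto_abs_sub_inf (hX : OrderComplete X) {u : X} (hu : IsWeakUnit u)
    {I : Type*} [Preorder I] [IsDirected I (· ≤ ·)] [Nonempty I] (x : I → X) (l : X) :
    UoTendsto x l ↔ OrderTendsto (fun i => |x i - l| ⊓ u) 0 := by
  refine ⟨fun h => h u hu.pos.le, fun h y hy => ?_⟩
  have hz : ∀ i, 0 ≤ |x i - l| ⊓ y := fun i => le_inf (abs_nonneg _) hy
  have hzu : ∀ i, 0 ≤ |x i - l| ⊓ y ⊓ u := fun i => le_inf (hz i) hu.pos.le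
  have hcofinal : IsCofinal (range (id : I → I)) := by simpa only [range_id] using IsCofinal.univ
  obtain ⟨t, ht⟩ := hX.exists_isLUB_image_Ici
    (z := fun i => |x i - l| ⊓ y) ⟨0, forall_mem_range.2 hz⟩
    ⟨y, forall_mem_range.2 fun _ => inf_le_right⟩
  have htu : ∀ i, IsLUB ((fun j => |x j - l| ⊓ y ⊓ u) '' Ici i) (t i ⊓ u) := fun i => by
    simpa only [image_image] using isLUB_image_inf_right (ht i) u
  have htrunc : OrderTendsto (fun i => |x i - l| ⊓ y ⊓ u) 0 := h.of_abs_le fun i =>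
    abs_le_abs_of_nonneg (hzu i) (inf_le_inf_right u inf_le_left)
  have hinf : IsGLB (range fun i => t i ⊓ u) 0 :=
    (orderTendsto_zero_iff_isGLB_range hzu monotone_id hcofinal htu).1 htrunc
  rw [orderTendsto_zero_iff_isGLB_range hz monotone_id hcofinal ht]
  exact hu.isGLB_zero_of_image_inf (by rwa [← range_comp])

end LatticeOrderedGroup

instance instIsDirectedProd {Γ Δ : Type*} [LE Γ] [LE Δ] [IsDirected Γ (· ≤ ·)]
    [IsDirected Δ (· ≤ ·)] : IsDirected (Γ × Δ) (· ≤ ·) where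
  directed p q := by
    obtain ⟨γ, hpγ, hqγ⟩ := exists_ge_ge p.1 q.1
    obtain ⟨δ, hpδ, hqδ⟩ := exists_ge_ge p.2 q.2
    exact ⟨(γ, δ), ⟨hpγ, hpδ⟩, ⟨hqγ, hqδ⟩⟩

theorem isCofinal_range_diag (Γ : Type*) [Preorder Γ] [IsDirected Γ (· ≤ ·)] :
    IsCofinal (range fun α : Γ => (α, α)) := by
  rintro ⟨β, β'⟩
  obtain ⟨α, hβ, hβ'⟩ := exists_ge_ge β β'
  exact ⟨(α, α), mem_range_self α, hβ, hβ'⟩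

theorem stmt5_general {X : Type*} [Lattice X] [AddCommGroup X]
    [CovariantClass X X (· + ·) (· ≤ ·)] (hX : OrderComplete X) {u : X} (hu : IsWeakUnit u)
    {Γ : Type*} [Preorder Γ] [IsDirected Γ (· ≤ ·)] [Nonempty Γ] (x : Γ → X) :
    UoCauchy x ↔
      ∃ s : Γ → X,
        (∀ α : Γ, IsLUB {v : X | ∃ β β' : Γ, α ≤ β ∧ α ≤ β' ∧ v = |x β - x β'| ⊓ u} (s α)) ∧
        IsGLB (Set.range s) 0 := by
  let z : Γ × Γ → X := fun p => |x p.1 - x p.2| ⊓ u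
  have hz : ∀ p, 0 ≤ z p := fun p => le_inf (abs_nonneg _) hu.pos.le
  have htail : ∀ α : Γ,
      {v : X | ∃ β β' : Γ, α ≤ β ∧ α ≤ β' ∧ v = |x β - x β'| ⊓ u} = z '' Ici (α, α) := fun α => by
    ext v
    simp only [mem_ofPred_eq, mem_image, Prod.exists, mem_Ici, Prod.mk_le_mk, and_assoc, z, eq_comm]
  have hinf {s : Γ → X} (hs : ∀ α, IsLUB (z '' Ici (α, α)) (s α)) :
      OrderTendsto z 0 ↔ IsGLB (range s) 0 :=
    orderTendsto_zero_iff_isGLB_range hz (monotone_id.prodMk monotone_id)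
      (isCofinal_range_diag Γ) hs
  obtain ⟨t, ht⟩ := hX.exists_isLUB_image_Ici (z := z) ⟨0, forall_mem_range.2 hz⟩
    ⟨u, forall_mem_range.2 fun _ => inf_le_right⟩
  rw [UoCauchy, uoTendsto_iff_orderTendsto_abs_sub_inf hX hu]
  simp only [sub_zero, htail]
  exact ⟨fun h => ⟨fun α => t (α, α), fun α => ht (α, α), (hinf fun α => ht (α, α)).1 h⟩,
    fun ⟨_, hs, h⟩ => (hinf hs).2 h⟩

/-- In an order complete vector lattice with a weak unit `u > 0`, a net
`(x_α)` is uo-Cauchy iff `inf_α sup_{β, β' ≥ α} |x_β - x_β'| ⊓ u = 0`, i.e. iff there is a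
function `s` assigning to each index `α` the supremum of `{|x_β - x_β'| ⊓ u : β, β' ≥ α}`,
such that `inf_α s α = 0`. -/
theorem stmt5 {X : Type*} [Lattice X] [AddCommGroup X]
    [CovariantClass X X (· + ·) (· ≤ ·)] [Module ℝ X] [PosSMulMono ℝ X]
    (harch : VLArchimedean X)
    -- `X` is order complete:
    (hdc : ∀ S : Set X, S.Nonempty → BddBelow S → BddAbove S → ∃ s, IsLUB S s)
    -- `u` is a weak unit:
    (u : X) (hu : 0 < u) (huweak : ∀ x : X, 0 ≤ x → x ⊓ u = 0 → x = 0)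
    {Γ : Type*} [Preorder Γ] [IsDirected Γ (· ≤ ·)] [Nonempty Γ] (x : Γ → X) :
    UoCauchy x ↔
      ∃ s : Γ → X,
        (∀ α : Γ, IsLUB {v : X | ∃ β β' : Γ, α ≤ β ∧ α ≤ β' ∧ v = |x β - x β'| ⊓ u} (s α)) ∧
        IsGLB (Set.range s) 0 := by
  exact stmt5_general hdc ⟨hu, huweak⟩ x
end

section
/- Let X be a vector lattice with a weak unit u > 0 which has the countable sup property. Then the universal completion X^u of X also has the countable sup property. -/
open Filter Set

/-!
Call an `ℓ`-group *ccc* if its disjoint sets of positive elements are countable. In an Archimedean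
`ℓ`-group with a weak unit `u`, this is equivalent to the countable sup property.

* If `M` is a maximal disjoint set, then `u` is the supremum of the elements `u ⊓ n • m`. Countably
  many of these have supremum `u`, and an element of `M` that does not occur among them would be
  disjoint from `u`.
* Conversely, if `B` has infimum `0`, then for each `n` every positive element dominates a positive
  one that is disjoint from `(n • b - u)⁺` for some `b ∈ B`. A maximal disjoint set of such elements
  is countable, so countably many `b` suffice to force `n • t ≤ u` for each of their positive lower
  bounds `t`; letting `n` vary, `t = 0`.

The ccc passes from an order dense sublattice to the ambient lattice, because elements chosen below
the members of a disjoint set are again disjoint.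
-/

section Definitions

/-- The countable sup property: every set with a supremum has an at most countable subset with the
same supremum. -/
def CountableSupProperty (X : Type*) [Preorder X] : Prop :=
  ∀ (A : Set X) (s : X), IsLUB A s → ∃ C ⊆ A, C.Countable ∧ IsLUB C s

variable {X : Type*} [SemilatticeInf X] [Zero X]

/-- A disjoint system: a set of pairwise disjoint strictly positive elements. Disjointness of
positive elements is written `a ⊓ b = 0` because `0` is not the least element of `X`. -/
structure IsDisjointSystem (M : Set X) : Prop where
  pos : ∀ x ∈ M, 0 < x
  pairwise : M.Pairwise fun a b => a ⊓ b = 0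

/-- The disjoint complement of `M` is trivial. For disjoint systems this is maximality; it is tested
on positive elements only, which suffices for sets `M` of positive elements. -/
def HasTrivialDisjointComplement (M : Set X) : Prop :=
  ∀ x : X, 0 ≤ x → (∀ m ∈ M, x ⊓ m = 0) → x = 0

/-- A weak unit: a strictly positive element disjoint from no other strictly positive element. -/
structure IsWeakUnit_s8 (u : X) : Prop where
  pos : 0 < u
  eq_zero_of_inf_eq_zero : ∀ x : X, 0 ≤ x → x ⊓ u = 0 → x = 0

/-- The countable chain condition for lattices with a zero: every disjoint system is countable. -/
def CountableChainCondition (X : Type*) [SemilatticeInf X] [Zero X] : Prop :=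
  ∀ M : Set X, IsDisjointSystem M → M.Countable

end Definitions

section DisjointSystem

variable {X : Type*} [SemilatticeInf X] [Zero X]

theorem inf_eq_zero_of_le_of_le {a a' b b' : X} (h : a' ⊓ b' = 0) (ha : 0 ≤ a) (hb : 0 ≤ b)
    (haa' : a ≤ a') (hbb' : b ≤ b') : a ⊓ b = 0 :=
  le_antisymm (h ▸ inf_le_inf haa' hbb') (le_inf ha hb)

theorem IsDisjointSystem.empty : IsDisjointSystem (∅ : Set X) :=
  ⟨fun _ hx => hx.elim, pairwise_empty _⟩

theorem IsDisjointSystem.sUnion {c : Set (Set X)} (hc : IsChain (· ⊆ ·) c)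
    (h : ∀ M ∈ c, IsDisjointSystem M) : IsDisjointSystem (⋃₀ c) where
  pos := fun x ⟨M, hM, hx⟩ => (h M hM).pos x hx
  pairwise := (pairwise_sUnion hc.directedOn).2 fun M hM => (h M hM).pairwise

theorem IsDisjointSystem.insert {M : Set X} (hM : IsDisjointSystem M) {w : X} (hw : 0 < w)
    (hwM : ∀ m ∈ M, w ⊓ m = 0) : IsDisjointSystem (insert w M) where
  pos := forall_mem_insert.2 ⟨hw, hM.pos⟩
  pairwise := hM.pairwise.insert fun m hm _ => ⟨hwM m hm, inf_comm m w ▸ hwM m hm⟩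

theorem IsDisjointSystem.exists_superset_hasTrivialDisjointComplement {N D : Set X}
    (hN : IsDisjointSystem N) (hND : N ⊆ D) (hD : ∀ z : X, 0 < z → ∃ w ∈ D, 0 < w ∧ w ≤ z) :
    ∃ M, N ⊆ M ∧ M ⊆ D ∧ IsDisjointSystem M ∧ HasTrivialDisjointComplement M := by
  obtain ⟨M, hNM, hM⟩ := zorn_subset_nonempty {M : Set X | M ⊆ D ∧ IsDisjointSystem M}
    (fun c hc hchain _ => ⟨⋃₀ c, ⟨sUnion_subset fun M hM => (hc hM).1,
      .sUnion hchain fun M hM => (hc hM).2⟩, fun _ => subset_sUnion_of_mem⟩) N ⟨hND, hN⟩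
  refine ⟨M, hNM, hM.prop.1, hM.prop.2, fun z hz hzM => ?_⟩
  by_contra hz0
  obtain ⟨w, hwD, hw, hwz⟩ := hD z (hz.lt_of_ne' hz0)
  have hwM : ∀ m ∈ M, w ⊓ m = 0 := fun m hm =>
    inf_eq_zero_of_le_of_le (hzM m hm) hw.le (hM.prop.2.pos m hm).le hwz le_rfl
  have hmem : w ∈ M :=
    hM.le_of_ge ⟨insert_subset hwD hM.prop.1, hM.prop.2.insert hw hwM⟩ (subset_insert w M)
      (mem_insert w M)
  exact hw.ne' (inf_idem w ▸ hwM w hmem)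

end DisjointSystem

section LatticeOrderedGroup

variable {X : Type*} [Lattice X] [AddCommGroup X] [AddLeftMono X]

theorem add_le_of_inf_eq_zero {a b c : X} (h : a ⊓ b = 0) (ha : a ≤ c) (hb : b ≤ c) :
    a + b ≤ c := by
  rw [← inf_add_sup, h, zero_add]
  exact sup_le ha hb

theorem inf_add_eq_zero {a b c : X} (hb : a ⊓ b = 0) (hc : a ⊓ c = 0) : a ⊓ (b + c) = 0 := by
  have ha0 : 0 ≤ a := hb ▸ inf_le_left
  have hb0 : 0 ≤ b := hb ▸ inf_le_right
  have hc0 : 0 ≤ c := hc ▸ inf_le_right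
  refine le_antisymm ?_ (le_inf ha0 (add_nonneg hb0 hc0))
  calc a ⊓ (b + c) ≤ (a + a) ⊓ (b + a) ⊓ ((a + c) ⊓ (b + c)) :=
        le_inf (le_inf (inf_le_left.trans (le_add_of_nonneg_left ha0))
            (inf_le_left.trans (le_add_of_nonneg_left hb0)))
          (inf_le_inf_right _ (le_add_of_nonneg_right hc0))
    _ = a ⊓ b + a ⊓ c := by rw [add_inf, inf_add, inf_add]
    _ = 0 := by rw [hb, hc, add_zero]

theorem inf_nsmul_eq_zero {a b : X} (h : a ⊓ b = 0) (n : ℕ) : a ⊓ n • b = 0 := by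
  induction n with
  | zero => rw [zero_nsmul]; exact inf_eq_right.2 (h ▸ inf_le_left)
  | succ n ih => rw [succ_nsmul]; exact inf_add_eq_zero ih h

theorem inf_eq_zero_of_isLUB {C : Set X} {s x : X} (hs : IsLUB C s) (hs0 : 0 ≤ s) (hx : 0 ≤ x)
    (hC : ∀ a ∈ C, 0 ≤ a) (h : ∀ a ∈ C, a ⊓ x = 0) : s ⊓ x = 0 := by
  have hp : 0 ≤ s ⊓ x := le_inf hs0 hx
  have hub : s - s ⊓ x ∈ upperBounds C := fun a ha => le_sub_iff_add_le.2 <|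
    add_le_of_inf_eq_zero (inf_eq_zero_of_le_of_le (h a ha) (hC a ha) hp le_rfl inf_le_right)
      (hs.1 ha) inf_le_left
  exact le_antisymm ((le_sub_self_iff s).1 (hs.2 hub)) hp

theorem isGLB_image_sub_left_zero_iff {A : Set X} {s : X} :
    IsGLB ((fun a => s - a) '' A) 0 ↔ IsLUB A s := by
  rw [← sub_self s]
  exact (OrderIso.subLeft s).isLUB_image'

theorem isGLB_image_two_nsmul {B : Set X} {c : X} (hB : IsGLB B c) :
    IsGLB ((fun b => 2 • b) '' B) (2 • c) := by
  refine ⟨forall_mem_image.2 fun b hb => nsmul_le_nsmul_right (hB.1 hb) 2, fun p hp => ?_⟩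
  have hadd : ∀ b ∈ B, ∀ b' ∈ B, p ≤ b + b' := fun b hb b' hb' => by
    refine sub_nonneg.1 (nsmul_two_semiclosed ?_)
    rw [nsmul_sub, nsmul_add, two_nsmul p]
    exact sub_nonneg.2 (add_le_add (hp (mem_image_of_mem _ hb)) (hp (mem_image_of_mem _ hb')))
  have hsub : ∀ b ∈ B, p - b ≤ c := fun b hb =>
    hB.2 fun b' hb' => sub_le_iff_le_add'.2 (hadd b hb b' hb')
  rw [two_nsmul, ← sub_le_iff_le_add]
  exact hB.2 fun b hb => sub_le_comm.1 (hsub b hb)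

-- Powers of `2` bound all multiples of positive elements and reduce the claim to doubling, where
-- `nsmul_two_semiclosed` takes the place of division by `2`.
theorem isGLB_image_two_pow_nsmul {B : Set X} {c : X} (hB : IsGLB B c) (n : ℕ) :
    IsGLB ((fun b => 2 ^ n • b) '' B) (2 ^ n • c) := by
  induction n with
  | zero => simpa using hB
  | succ n ih =>
    simpa only [image_image, smul_smul, ← pow_succ'] using isGLB_image_two_nsmul ih

theorem nonpos_of_forall_le_nsmul {B : Set X} (hB : IsGLB B 0) {p : X} {n : ℕ}
    (hp : ∀ b ∈ B, p ≤ n • b) : p ≤ 0 := by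
  rw [← nsmul_zero (2 ^ n)]
  exact (isGLB_image_two_pow_nsmul hB n).2 <| forall_mem_image.2 fun b hb =>
    (hp b hb).trans (nsmul_le_nsmul_left (hB.1 hb) Nat.lt_two_pow_self.le)

end LatticeOrderedGroup

section CountableSupProperty

variable {X : Type*} [Lattice X] [AddCommGroup X] [AddLeftMono X]

theorem isLUB_inf_nsmul (harch : VLArchimedean X) {M : Set X} (hM0 : ∀ m ∈ M, 0 ≤ m)
    (hM : HasTrivialDisjointComplement M) {u : X} (hu : 0 ≤ u) :
    IsLUB {a | ∃ m ∈ M, ∃ n : ℕ, a = u ⊓ n • m} u := by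
  refine ⟨fun a ⟨m, _, n, ha⟩ => ha ▸ inf_le_left, fun v hv => ?_⟩
  have ht : 0 ≤ u - u ⊓ v := sub_nonneg.2 inf_le_left
  have hdisj : ∀ m ∈ M, (u - u ⊓ v) ⊓ m = 0 := by
    intro m hm
    have hmultiple : ∀ n : ℕ, n • ((u - u ⊓ v) ⊓ m) ≤ u → n • ((u - u ⊓ v) ⊓ m) ≤ u ⊓ v :=
      fun n hn => le_inf hn <|
        (le_inf hn (nsmul_le_nsmul_right inf_le_right n)).trans (hv ⟨m, hm, n, rfl⟩)
    refine harch _ (u ⊓ v) (le_inf ht (hM0 m hm)) fun n => hmultiple n ?_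
    induction n with
    | zero => rwa [zero_nsmul]
    | succ n ih =>
      calc (n + 1) • ((u - u ⊓ v) ⊓ m) = n • ((u - u ⊓ v) ⊓ m) + (u - u ⊓ v) ⊓ m :=
            succ_nsmul _ n
        _ ≤ u ⊓ v + (u - u ⊓ v) := add_le_add (hmultiple n ih) inf_le_left
        _ = u := add_sub_cancel _ _
  exact inf_eq_left.1 (sub_eq_zero.1 (hM _ ht hdisj)).symm

theorem CountableSupProperty.countableChainCondition (h : CountableSupProperty X)
    (harch : VLArchimedean X) {u : X} (hu : IsWeakUnit_s8 u) : CountableChainCondition X := by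
  intro N hN
  obtain ⟨M, hNM, -, hM, hMtriv⟩ := hN.exists_superset_hasTrivialDisjointComplement
    (subset_univ N) fun z hz => ⟨z, mem_univ z, hz, le_rfl⟩
  have hM0 : ∀ m ∈ M, 0 ≤ m := fun m hm => (hM.pos m hm).le
  obtain ⟨C, hC, hCcount, hCu⟩ := h _ u (isLUB_inf_nsmul harch hM0 hMtriv hu.pos.le)
  have hCM : ∀ a ∈ C, ∃ m ∈ M, ∃ n : ℕ, a = u ⊓ n • m := fun a ha => hC ha
  choose! f hfM n hn using hCM
  suffices M ⊆ f '' C from (hCcount.image f).mono (hNM.trans this)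
  intro m hm
  by_contra hmC
  have hC0 : ∀ a ∈ C, 0 ≤ a := fun a ha =>
    hn a ha ▸ le_inf hu.pos.le (nsmul_nonneg (hM0 _ (hfM a ha)) _)
  have hCm : ∀ a ∈ C, a ⊓ m = 0 := fun a ha => by
    have hne : m ≠ f a := fun hmf => hmC ⟨a, ha, hmf.symm⟩
    have hdisj := inf_nsmul_eq_zero (hM.pairwise hm (hfM a ha) hne) (n a)
    rw [inf_comm]
    exact inf_eq_zero_of_le_of_le hdisj (hM0 m hm) (hC0 a ha) le_rfl
      ((hn a ha).trans_le inf_le_right)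
  have hum : u ⊓ m = 0 := inf_eq_zero_of_isLUB hCu hu.pos.le (hM0 m hm) hC0 hCm
  exact (hM.pos m hm).ne' (hu.eq_zero_of_inf_eq_zero m (hM0 m hm) (inf_comm u m ▸ hum))

theorem countableSupProperty_of_forall_isGLB_zero
    (h : ∀ B : Set X, IsGLB B 0 → ∃ C ⊆ B, C.Countable ∧ IsGLB C 0) :
    CountableSupProperty X := by
  intro A s hA
  obtain ⟨C', hC'A, hC', hC'0⟩ := h _ (isGLB_image_sub_left_zero_iff.2 hA)
  obtain ⟨C, hCA, rfl⟩ := subset_image_iff.1 hC'A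
  exact ⟨C, hCA, countable_of_injective_of_countable_image sub_right_injective.injOn hC',
    isGLB_image_sub_left_zero_iff.1 hC'0⟩

theorem IsWeakUnit_s8.exists_le_inf_posPart_eq_zero {e : X} (he : IsWeakUnit_s8 e) {B : Set X}
    (hB : IsGLB B 0) (n : ℕ) {z : X} (hz : 0 < z) :
    ∃ w, (∃ b ∈ B, w ⊓ (n • b - e)⁺ = 0) ∧ 0 < w ∧ w ≤ z := by
  by_contra! hcon
  have hneg : ∀ b ∈ B, (n • b - e)⁻ ⊓ z = 0 := fun b hb => by
    have hnonneg : 0 ≤ (n • b - e)⁻ ⊓ z := le_inf (negPart_nonneg _) hz.le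
    by_contra hne
    refine hcon _ ⟨b, hb, ?_⟩ (hnonneg.lt_of_ne' hne) inf_le_right
    exact inf_eq_zero_of_le_of_le (inf_comm _ _ |>.trans (posPart_inf_negPart_eq_zero _)) hnonneg
      (posPart_nonneg _) inf_le_left le_rfl
  have hle : ∀ b ∈ B, z ⊓ e ≤ n • b := fun b hb => by
    have hnb : 0 ≤ n • b := nsmul_nonneg (hB.1 hb) n
    rw [← sub_nonpos, ← hneg b hb]
    refine le_inf ?_ ((sub_le_self _ hnb).trans inf_le_left)
    calc z ⊓ e - n • b ≤ e - n • b := sub_le_sub_right inf_le_right _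
      _ = -(n • b - e) := (neg_sub _ _).symm
      _ ≤ (n • b - e)⁻ := neg_le_negPart _
  have hze : z ⊓ e = 0 :=
    le_antisymm (nonpos_of_forall_le_nsmul hB hle) (le_inf hz.le he.pos.le)
  exact hz.ne' (he.eq_zero_of_inf_eq_zero z hz.le hze)

theorem CountableChainCondition.exists_countable_forall_nsmul_le (h : CountableChainCondition X)
    {e : X} (he : IsWeakUnit_s8 e) {B : Set X} (hB : IsGLB B 0) (n : ℕ) :
    ∃ C ⊆ B, C.Countable ∧ ∀ t ∈ lowerBounds C, 0 ≤ t → n • t ≤ e := by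
  obtain ⟨M, -, hMB, hM, hMtriv⟩ :=
    IsDisjointSystem.empty.exists_superset_hasTrivialDisjointComplement (empty_subset _)
      fun z hz => he.exists_le_inf_posPart_eq_zero hB n hz
  choose! f hfB hf using hMB
  refine ⟨f '' M, image_subset_iff.2 fun m hm => hfB hm, (h M hM).image f, fun t ht _ => ?_⟩
  rw [← sub_nonpos, ← posPart_eq_zero]
  refine hMtriv _ (posPart_nonneg _) fun m hm => ?_
  rw [inf_comm]
  exact inf_eq_zero_of_le_of_le (hf hm) (hM.pos m hm).le (posPart_nonneg _) le_rfl <|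
    posPart_mono <| sub_le_sub_right (nsmul_le_nsmul_right (ht (mem_image_of_mem f hm)) n) e

theorem CountableChainCondition.countableSupProperty (h : CountableChainCondition X)
    (harch : VLArchimedean X) {e : X} (he : IsWeakUnit_s8 e) : CountableSupProperty X := by
  refine countableSupProperty_of_forall_isGLB_zero fun B hB => ?_
  choose C hCB hC hCe using h.exists_countable_forall_nsmul_le he hB
  have hUB : ⋃ n, C n ⊆ B := iUnion_subset hCB
  refine ⟨⋃ n, C n, hUB, countable_iUnion hC, fun b hb => hB.1 (hUB hb), fun v hv => ?_⟩
  have hv' : ∀ n, v⁺ ∈ lowerBounds (C n) := fun n b hb =>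
    sup_le (hv (mem_iUnion_of_mem n hb)) (hB.1 (hCB n hb))
  exact posPart_eq_zero.1 <|
    harch v⁺ e (posPart_nonneg v) fun n => hCe n v⁺ (hv' n) (posPart_nonneg v)

theorem countableSupProperty_iff_countableChainCondition (harch : VLArchimedean X) {u : X}
    (hu : IsWeakUnit_s8 u) : CountableSupProperty X ↔ CountableChainCondition X :=
  ⟨fun h => h.countableChainCondition harch hu, fun h => h.countableSupProperty harch hu⟩

end CountableSupProperty

section OrderDense

variable {X Y : Type*} [SemilatticeInf X] [Zero X] [SemilatticeInf Y] [Zero Y]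

theorem IsWeakUnit_s8.map_of_orderDense {ι : X ↪o Y} (hinf : ∀ a b, ι (a ⊓ b) = ι a ⊓ ι b)
    (hzero : ι 0 = 0) (hdense : ∀ z : Y, 0 < z → ∃ x : X, 0 < ι x ∧ ι x ≤ z)
    {u : X} (hu : IsWeakUnit_s8 u) : IsWeakUnit_s8 (ι u) := by
  have hpos : ∀ {x : X}, 0 < ι x ↔ 0 < x := fun {x} => hzero ▸ ι.lt_iff_lt
  refine ⟨hpos.2 hu.pos, fun z hz hzu => ?_⟩
  by_contra hz0
  obtain ⟨x, hx, hxz⟩ := hdense z (hz.lt_of_ne' hz0)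
  refine (hpos.1 hx).ne' (hu.eq_zero_of_inf_eq_zero x (hpos.1 hx).le (ι.injective ?_))
  rw [hinf, hzero]
  exact inf_eq_zero_of_le_of_le hzu hx.le (hpos.2 hu.pos).le hxz le_rfl

theorem CountableChainCondition.of_orderDense (h : CountableChainCondition X) {ι : X ↪o Y}
    (hinf : ∀ a b, ι (a ⊓ b) = ι a ⊓ ι b) (hzero : ι 0 = 0)
    (hdense : ∀ z : Y, 0 < z → ∃ x : X, 0 < ι x ∧ ι x ≤ z) : CountableChainCondition Y := by
  intro N hN
  choose! f hf hfle using hdense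
  have hpos : ∀ y ∈ N, 0 < f y := fun y hy =>
    ι.lt_iff_lt.1 (hzero ▸ hf y (hN.pos y hy))
  have hdisj : N.Pairwise fun y z => f y ⊓ f z = 0 := fun y hy z hz hyz => ι.injective <| by
    rw [hinf, hzero]
    exact inf_eq_zero_of_le_of_le (hN.pairwise hy hz hyz) (hf y (hN.pos y hy)).le
      (hf z (hN.pos z hz)).le (hfle y (hN.pos y hy)) (hfle z (hN.pos z hz))
  have hinj : InjOn f N := fun y hy z hz hyz => by
    by_contra hne
    have hself : f y ⊓ f z = 0 := hdisj hy hz hne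
    rw [hyz, inf_idem] at hself
    exact (hpos z hz).ne' hself
  refine countable_of_injective_of_countable_image hinj (h (f '' N) ⟨?_, ?_⟩)
  · exact forall_mem_image.2 hpos
  · exact hinj.pairwise_image.2 hdisj

end OrderDense

section LatticeEmbedding

variable {X Y : Type*} [Lattice X] [AddCommGroup X] [Lattice Y] [AddCommGroup Y]

theorem map_inf_of_map_sup [AddLeftMono X] [AddLeftMono Y] (ι : X →+ Y)
    (hsup : ∀ a b, ι (a ⊔ b) = ι a ⊔ ι b) (a b : X) : ι (a ⊓ b) = ι a ⊓ ι b := by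
  apply add_right_cancel (b := ι a ⊔ ι b)
  rw [← hsup, ← map_add, inf_add_sup, hsup, inf_add_sup, map_add]

theorem VLArchimedean.of_orderEmbedding (h : VLArchimedean Y) (ι : X →+ Y)
    (hle : ∀ {a b}, ι a ≤ ι b ↔ a ≤ b) : VLArchimedean X := by
  intro x y hx hxy
  have hι0 : ι x = 0 := h (ι x) (ι y) (map_zero ι ▸ hle.2 hx) fun n => by
    rw [← map_nsmul]
    exact hle.2 (hxy n)
  exact le_antisymm (hle.1 (by rw [hι0, map_zero])) hx

theorem stmt8_general [AddLeftMono X] [AddLeftMono Y] (harch : VLArchimedean Y) (ι : X →+ Y)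
    (hinj : Function.Injective ι) (hsup : ∀ a b, ι (a ⊔ b) = ι a ⊔ ι b)
    (hdense : ∀ z : Y, 0 < z → ∃ x : X, 0 < ι x ∧ ι x ≤ z)
    {u : X} (hu : IsWeakUnit_s8 u) (hX : CountableSupProperty X) : CountableSupProperty Y := by
  have hinf := map_inf_of_map_sup ι hsup
  have hle : ∀ {a b}, ι a ≤ ι b ↔ a ≤ b := fun {a b} => by
    rw [← sup_eq_right, ← hsup, hinj.eq_iff, sup_eq_right]
  let j : X ↪o Y := .ofMapLEIff ι fun _ _ => hle
  have hXccc : CountableChainCondition X :=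
    (countableSupProperty_iff_countableChainCondition (harch.of_orderEmbedding ι hle) hu).1 hX
  have hYccc : CountableChainCondition Y :=
    hXccc.of_orderDense (ι := j) hinf (map_zero ι) hdense
  have hju : IsWeakUnit_s8 (j u) := hu.map_of_orderDense hinf (map_zero ι) hdense
  exact (countableSupProperty_iff_countableChainCondition harch hju).2 hYccc

end LatticeEmbedding

/-- If a vector lattice `X` with a weak unit `u > 0` has the countable sup
property, then its universal completion `Xᵘ` (here: any universally complete vector lattice
`Y` containing `X` as an order dense sublattice, via a lattice embedding `ι`) also has the
countable sup property. -/
theorem stmt8 {X Y : Type*}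
    [Lattice X] [AddCommGroup X] [CovariantClass X X (· + ·) (· ≤ ·)]
    [Module ℝ X] [PosSMulMono ℝ X]
    [Lattice Y] [AddCommGroup Y] [CovariantClass Y Y (· + ·) (· ≤ ·)]
    [Module ℝ Y] [PosSMulMono ℝ Y]
    (harchX : VLArchimedean X) (harchY : VLArchimedean Y)
    -- `ι` embeds `X` into `Y` as a sublattice:
    (ι : X →ₗ[ℝ] Y) (hinj : Function.Injective ι)
    (hlatt : ∀ a b : X, ι (a ⊔ b) = ι a ⊔ ι b)
    -- `X` is order dense in `Y`:
    (hdense : ∀ z : Y, 0 < z → ∃ x : X, 0 < ι x ∧ ι x ≤ z)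
    -- `Y` is order complete:
    (hYdc : ∀ S : Set Y, S.Nonempty → BddBelow S → BddAbove S → ∃ s, IsLUB S s)
    -- `Y` is laterally complete:
    (hYlat : ∀ A : Set Y, A.Nonempty → (∀ a ∈ A, 0 ≤ a) →
      A.Pairwise (fun a b => a ⊓ b = 0) → ∃ s, IsLUB A s)
    -- `u` is a weak unit of `X`:
    (u : X) (hu : 0 < u) (huweak : ∀ x : X, 0 ≤ x → x ⊓ u = 0 → x = 0)
    -- `X` has the countable sup property:
    (hcspX : ∀ (A : Set X) (s : X), IsLUB A s → ∃ C ⊆ A, C.Countable ∧ IsLUB C s) :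
    -- then `Y` has the countable sup property:
    ∀ (A : Set Y) (s : Y), IsLUB A s → ∃ C ⊆ A, C.Countable ∧ IsLUB C s := by
  exact stmt8_general harchY ι.toAddMonoidHom hinj hlatt hdense ⟨hu, huweak⟩ hcspX
end

section
/- Direct ℕ × ℕ by (m', n') ≥ (m, n) iff m' ≥ m and n' ≥ n, and define the net (x_{(m,n)}) in ℝ^ℕ by x_{(m,n)}(k) = m + n if m ≤ k or n ≤ k, and x_{(m,n)}(k) = 1/(m+n) if m > k and n > k. Then each x_{(m,n)} is a bounded sequence (lies in ℓ∞), and the net (x_{(m,n)}) uo-converges to 0 in ℝ^ℕ. -/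
open Filter Set

/-- The net `x : ℕ × ℕ → ℝ^ℕ` (with `ℕ × ℕ` directed by the componentwise order):
`x (m, n) k = m + n` if `m ≤ k` or `n ≤ k`, and `x (m, n) k = 1 / (m + n)` otherwise. -/
noncomputable def xnet : ℕ × ℕ → (ℕ → ℝ) := fun p k =>
  if p.1 ≤ k ∨ p.2 ≤ k then ((p.1 : ℝ) + p.2) else 1 / ((p.1 : ℝ) + p.2)

/-! In a product of lattice-ordered groups, uo-convergence can be tested one coordinate at a time.
The truncation by `y` bounds the whole net by `y`, so an eventual bound `a` for the `i`-th
coordinate extends to the eventual bound `Function.update y i a` for the net; hence the infimum of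
all eventual bounds vanishes as soon as it vanishes in each coordinate. In a fixed coordinate `k`
the net `xnet` takes the values `1 / (m + n)` once `m, n > k`, although its tails are unbounded. -/

open scoped Topology

/-- The elements dominating some tail of the net `|x α - l|`, tails being encoded by the filter
`atTop`. For directed `Γ`, it contains every set witnessing that `x` order converges to `l`. -/
def eventualBounds {X Γ : Type*} [Lattice X] [AddCommGroup X] [Preorder Γ]
    (x : Γ → X) (l : X) : Set X :=
  {a | ∀ᶠ α in atTop, |x α - l| ≤ a}

section LatticeOrderedGroup

variable {X Γ : Type*} [Lattice X] [AddCommGroup X] [Preorder Γ] {x : Γ → X} {l : X}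

theorem directedOn_eventualBounds : DirectedOn (· ≥ ·) (eventualBounds x l) :=
  fun a ha b hb => ⟨a ⊓ b, (ha.and hb).mono fun _ h => le_inf h.1 h.2, inf_le_left, inf_le_right⟩

variable [IsOrderedAddMonoid X]

theorem mem_eventualBounds_abs_sub_inf {y a : X} (hy : 0 ≤ y) :
    a ∈ eventualBounds (fun α => |x α - l| ⊓ y) 0 ↔ ∀ᶠ α in atTop, |x α - l| ⊓ y ≤ a := by
  simp only [eventualBounds, mem_ofPred_eq, sub_zero, abs_of_nonneg (le_inf (abs_nonneg _) hy)]

theorem OrderTendsto.uoTendsto (h : OrderTendsto x l) : UoTendsto x l := by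
  intro y hy
  obtain ⟨A, hne, hdir, hglb, hbound⟩ := h
  refine ⟨A, hne, hdir, hglb, fun a ha => ?_⟩
  obtain ⟨α₀, hα₀⟩ := hbound a ha
  refine ⟨α₀, fun α hα => ?_⟩
  rw [sub_zero, abs_of_nonneg (le_inf (abs_nonneg _) hy)]
  exact inf_le_left.trans (hα₀ α hα)

variable [IsDirectedOrder Γ] [Nonempty Γ]

theorem zero_mem_lowerBounds_eventualBounds : 0 ∈ lowerBounds (eventualBounds x l) := by
  intro a ha
  obtain ⟨α, hα⟩ := Eventually.exists ha
  exact (abs_nonneg _).trans hα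

theorem orderTendsto_iff_isGLB_eventualBounds :
    OrderTendsto x l ↔ (eventualBounds x l).Nonempty ∧ IsGLB (eventualBounds x l) 0 := by
  constructor
  · rintro ⟨A, hne, -, hglb, hbound⟩
    have hsub : A ⊆ eventualBounds x l := fun a ha => eventually_atTop.2 (hbound a ha)
    exact ⟨hne.mono hsub, zero_mem_lowerBounds_eventualBounds,
      fun b hb => hglb.2 (lowerBounds_mono_set hsub hb)⟩
  · rintro ⟨hne, hglb⟩
    exact ⟨_, hne, directedOn_eventualBounds, hglb, fun a ha => eventually_atTop.1 ha⟩

end LatticeOrderedGroup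

section Pi

variable {ι Γ : Type*} {X : ι → Type*} [∀ i, Lattice (X i)] [∀ i, AddCommGroup (X i)]
  [∀ i, IsOrderedAddMonoid (X i)] [Preorder Γ] {x : Γ → ∀ i, X i} {l : ∀ i, X i}

theorem update_mem_eventualBounds_abs_sub_inf [DecidableEq ι] {y : ∀ i, X i} (hy : 0 ≤ y) {i : ι}
    {a : X i} (ha : a ∈ eventualBounds (fun α => |x α i - l i| ⊓ y i) 0) :
    Function.update y i a ∈ eventualBounds (fun α => |x α - l| ⊓ y) 0 := by
  rw [mem_eventualBounds_abs_sub_inf (hy i)] at ha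
  rw [mem_eventualBounds_abs_sub_inf hy]
  exact ha.mono fun α hα => le_update_iff.2 ⟨hα, fun j _ => inf_le_right⟩

theorem uoTendsto_pi_of_forall [IsDirectedOrder Γ] [Nonempty Γ]
    (h : ∀ i, UoTendsto (fun α => x α i) (l i)) : UoTendsto x l := by
  classical
  intro y hy
  have hcoord i : IsGLB (eventualBounds (fun α => |x α i - l i| ⊓ y i) 0) 0 :=
    (orderTendsto_iff_isGLB_eventualBounds.1 (h i (y i) (hy i))).2
  have hy_mem : y ∈ eventualBounds (fun α => |x α - l| ⊓ y) 0 :=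
    (mem_eventualBounds_abs_sub_inf hy).2 (Eventually.of_forall fun _ => inf_le_right)
  refine orderTendsto_iff_isGLB_eventualBounds.2
    ⟨⟨y, hy_mem⟩, zero_mem_lowerBounds_eventualBounds, fun b hb i => (hcoord i).2 fun a ha => ?_⟩
  simpa only [Function.update_self] using hb (update_mem_eventualBounds_abs_sub_inf hy ha) i

end Pi

theorem orderTendsto_of_tendsto {R Γ : Type*} [AddCommGroup R] [LinearOrder R]
    [IsOrderedAddMonoid R] [Nontrivial R] [DenselyOrdered R] [TopologicalSpace R]
    [OrderTopology R] [Preorder Γ] [IsDirectedOrder Γ] [Nonempty Γ] {x : Γ → R} {l : R}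
    (h : Tendsto x atTop (𝓝 l)) : OrderTendsto x l := by
  refine ⟨Ioi 0, nonempty_Ioi, ?_, isGLB_Ioi, fun ε hε => ?_⟩
  · exact fun a ha b hb => ⟨min a b, lt_min ha hb, min_le_left a b, min_le_right a b⟩
  · exact eventually_atTop.1 <|
      (LinearOrderedAddCommGroup.tendsto_nhds.1 h ε hε).mono fun _ => le_of_lt

theorem abs_xnet_le (p : ℕ × ℕ) (k : ℕ) :
    |xnet p k| ≤ max ((p.1 : ℝ) + p.2) (1 / ((p.1 : ℝ) + p.2)) := by
  unfold xnet
  split_ifs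
  · exact (abs_of_nonneg (by positivity)).trans_le (le_max_left _ _)
  · exact (abs_of_nonneg (by positivity)).trans_le (le_max_right _ _)

theorem xnet_apply_of_lt {p : ℕ × ℕ} {k : ℕ} (h₁ : k < p.1) (h₂ : k < p.2) :
    xnet p k = 1 / ((p.1 : ℝ) + p.2) :=
  if_neg (not_or.2 ⟨h₁.not_ge, h₂.not_ge⟩)

theorem tendsto_xnet_apply (k : ℕ) : Tendsto (fun p => xnet p k) atTop (𝓝 0) := by
  have hfst : Tendsto (Prod.fst : ℕ × ℕ → ℕ) atTop atTop := by
    rw [← prod_atTop_atTop_eq]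
    exact tendsto_fst
  have hsnd : Tendsto (Prod.snd : ℕ × ℕ → ℕ) atTop atTop := by
    rw [← prod_atTop_atTop_eq]
    exact tendsto_snd
  have hsum : Tendsto (fun p : ℕ × ℕ => (p.1 : ℝ) + p.2) atTop atTop :=
    (tendsto_natCast_atTop_atTop.comp hfst).atTop_add_atTop
      (tendsto_natCast_atTop_atTop.comp hsnd)
  refine (hsum.const_div_atTop 1).congr' ?_
  filter_upwards [hfst.eventually_gt_atTop k, hsnd.eventually_gt_atTop k] with p h₁ h₂
  exact (xnet_apply_of_lt h₁ h₂).symm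

/-- Each `xnet (m, n)` is a bounded sequence (lies in `ℓ∞`), and the net
`xnet` uo-converges to `0` in `ℝ^ℕ`. -/
theorem stmt11 :
    (∀ p : ℕ × ℕ, ∃ M : ℝ, ∀ k : ℕ, |xnet p k| ≤ M) ∧
    UoTendsto xnet (0 : ℕ → ℝ) := by
  refine ⟨fun p => ⟨_, abs_xnet_le p⟩, ?_⟩
  exact uoTendsto_pi_of_forall fun k => (orderTendsto_of_tendsto (tendsto_xnet_apply k)).uoTendsto
end

section
/- Direct ℕ × ℕ by (m', n') ≥ (m, n) iff m' ≥ m and n' ≥ n, and define the net (x_{(m,n)}) in ℝ^ℕ by x_{(m,n)}(k) = m + n if m ≤ k or n ≤ k, and x_{(m,n)}(k) = 1/(m+n) if m > k and n > k. Then no tail of this net is order bounded in ℝ^ℕ: for every (m₀, n₀) there is no y ∈ ℝ^ℕ with |x_{(m,n)}| ≤ y for all (m,n) ≥ (m₀,n₀). In particular, the net is not order convergent in ℝ^ℕ, although it is uo-Cauchy there. -/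
open Filter Set

/-!
In a power `ι → R` of a densely ordered group, pointwise convergence implies uo-convergence: the
infimum with a fixed `y ≥ 0` makes the net order bounded, and `y` with its `k`-th coordinate
replaced by any `ε > 0` still dominates a tail, so the eventual upper bounds have infimum `0`.
The net `xnet` tends to `0` pointwise, because each coordinate `k` only sees `1 / (m + n)` once
`m, n > k`. On the other hand `xnet (m₀, n) m₀ = m₀ + n` is unbounded in `n`, although an order
convergent net has an order bounded tail.
-/

open scoped Topology

theorem isDirectedOrder_prod {α β : Type*} [Preorder α] [Preorder β] [IsDirectedOrder α]
    [IsDirectedOrder β] : IsDirectedOrder (α × β) where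
  directed a b := by
    obtain ⟨c, hac, hbc⟩ := exists_ge_ge a.1 b.1
    obtain ⟨d, had, hbd⟩ := exists_ge_ge a.2 b.2
    exact ⟨(c, d), ⟨hac, had⟩, ⟨hbc, hbd⟩⟩

section LatticeOrderedGroup

variable {X Γ : Type*} [Lattice X] [AddCommGroup X] [Preorder Γ] {x : Γ → X} {l : X}

theorem OrderTendsto.exists_abs_le [AddLeftMono X] (h : OrderTendsto x l) :
    ∃ y : X, ∃ α₀ : Γ, ∀ α, α₀ ≤ α → |x α| ≤ y := by
  obtain ⟨A, ⟨a, ha⟩, -, -, hA⟩ := h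
  obtain ⟨α₀, hα₀⟩ := hA a ha
  refine ⟨a + |l|, α₀, fun α hα => ?_⟩
  calc |x α| = |x α - l + l| := by rw [sub_add_cancel]
    _ ≤ |x α - l| + |l| := abs_add_le _ _
    _ ≤ a + |l| := add_le_add_left (hα₀ α hα) _

theorem orderTendsto_of_isGLB [Nonempty Γ] [IsDirectedOrder Γ]
    (hne : {a | ∀ᶠ α in atTop, |x α - l| ≤ a}.Nonempty)
    (hglb : IsGLB {a | ∀ᶠ α in atTop, |x α - l| ≤ a} 0) : OrderTendsto x l := by
  refine ⟨_, hne, fun a ha b hb => ⟨a ⊓ b, ?_, inf_le_left, inf_le_right⟩, hglb,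
    fun a ha => eventually_atTop.mp ha⟩
  filter_upwards [ha, hb] with α hαa hαb using le_inf hαa hαb

end LatticeOrderedGroup

section Pointwise

variable {ι R Γ : Type*} [AddCommGroup R] [LinearOrder R] [IsOrderedAddMonoid R]
  [DenselyOrdered R] [TopologicalSpace R] [OrderTopology R]
  [Preorder Γ] [Nonempty Γ] [IsDirectedOrder Γ] {x : Γ → ι → R} {l y : ι → R}

theorem orderTendsto_of_tendsto_of_abs_sub_le (h : Tendsto x atTop (𝓝 l))
    (hy : ∀ᶠ α in atTop, |x α - l| ≤ y) : OrderTendsto x l := by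
  classical
  refine orderTendsto_of_isGLB ⟨y, hy⟩ ⟨fun a ha => ?_, fun b hb k => ?_⟩
  · obtain ⟨α, hα⟩ := ha.exists
    exact (abs_nonneg _).trans hα
  · refine le_of_forall_gt_imp_ge_of_dense fun ε hε => ?_
    have hk : ∀ᶠ α in atTop, |x α k - l k| < ε :=
      (tendsto_pi_nhds.mp h k).eventually (eventually_abs_sub_lt (l k) hε)
    have hmem : ∀ᶠ α in atTop, |x α - l| ≤ Function.update y k ε := by
      filter_upwards [hy, hk] with α hαy hαk
      exact le_update_iff.mpr ⟨hαk.le, fun j _ => hαy j⟩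
    simpa only [Function.update_self] using hb hmem k

theorem UoTendsto.of_tendsto (h : Tendsto x atTop (𝓝 l)) : UoTendsto x l := by
  intro y hy
  refine orderTendsto_of_tendsto_of_abs_sub_le (y := y) (tendsto_pi_nhds.mpr fun k => ?_)
    (Eventually.of_forall fun α => ?_)
  · have hyk : 0 ≤ y k := hy k
    have hk : Tendsto (fun α => |x α k - l k| ⊓ y k) atTop (𝓝 (|l k - l k| ⊓ y k)) :=
      ((tendsto_pi_nhds.mp h k).sub_const (l k)).abs.inf_nhds tendsto_const_nhds
    rwa [sub_self, abs_zero, inf_eq_left.mpr hyk] at hk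
  · rw [sub_zero, abs_of_nonneg (le_inf (abs_nonneg _) hy)]
    exact inf_le_right

theorem UoCauchy.of_tendsto (h : Tendsto x atTop (𝓝 l)) : UoCauchy x := by
  have : IsDirectedOrder (Γ × Γ) := isDirectedOrder_prod
  refine UoTendsto.of_tendsto ?_
  rw [← prod_atTop_atTop_eq, ← sub_self l]
  exact (h.comp tendsto_fst).sub (h.comp tendsto_snd)

end Pointwise

theorem tendsto_xnet : Tendsto xnet atTop (𝓝 0) := by
  refine tendsto_pi_nhds.mpr fun k => ?_
  have hsum : Tendsto (fun p : ℕ × ℕ => (p.1 : ℝ) + p.2) atTop atTop := by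
    rw [← prod_atTop_atTop_eq]
    exact (tendsto_natCast_atTop_atTop.comp tendsto_fst).atTop_add_atTop
      (tendsto_natCast_atTop_atTop.comp tendsto_snd)
  refine (hsum.const_div_atTop 1).congr' ?_
  filter_upwards [eventually_ge_atTop (k + 1, k + 1)] with p ⟨hp₁, hp₂⟩
  exact (if_neg (not_or.mpr ⟨Nat.not_le.mpr hp₁, Nat.not_le.mpr hp₂⟩)).symm

theorem not_exists_abs_xnet_le (m₀ n₀ : ℕ) :
    ¬ ∃ y : ℕ → ℝ, ∀ m n : ℕ, m₀ ≤ m → n₀ ≤ n → |xnet (m, n)| ≤ y := by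
  rintro ⟨y, hy⟩
  obtain ⟨n, hn⟩ := exists_nat_gt (y m₀)
  refine hn.not_ge ?_
  calc (n : ℝ) ≤ (m₀ : ℝ) + (max n n₀ : ℕ) := by
        exact_mod_cast (le_max_left n n₀).trans (Nat.le_add_left _ _)
    _ = xnet (m₀, max n n₀) m₀ := (if_pos (Or.inl le_rfl)).symm
    _ ≤ |xnet (m₀, max n n₀) m₀| := le_abs_self _
    _ ≤ y m₀ := hy m₀ (max n n₀) le_rfl (le_max_right n n₀) m₀

/-- No tail of the net `xnet` is order bounded in `ℝ^ℕ`; in particular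
the net is not order convergent in `ℝ^ℕ`, although it is uo-Cauchy there. -/
theorem stmt12 :
    (∀ m₀ n₀ : ℕ, ¬ ∃ y : ℕ → ℝ, ∀ m n : ℕ, m₀ ≤ m → n₀ ≤ n → |xnet (m, n)| ≤ y) ∧
    (¬ ∃ l : ℕ → ℝ, OrderTendsto xnet l) ∧
    UoCauchy xnet := by
  refine ⟨not_exists_abs_xnet_le, ?_, .of_tendsto tendsto_xnet⟩
  rintro ⟨l, hl⟩
  obtain ⟨y, ⟨m₀, n₀⟩, hy⟩ := hl.exists_abs_le
  exact not_exists_abs_xnet_le m₀ n₀ ⟨y, fun m n hm hn => hy (m, n) ⟨hm, hn⟩⟩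
end
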